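/- Under Assumption (C), let u = (u¹,…,u^d) be a probabilistic solution (for some initial data) such that t ↦ u(t,·) is continuous in L¹_loc(ℝ)^d. Then for every γ ∈ {1,…,d} and all τ, t ≥ 0: (i) for every a ∈ ℝ, u^γ(τ,a) ≤ u^γ(τ+t, a + λ̄^γ t); (ii) for every b ∈ ℝ, u^γ(τ,b⁻) ≥ u^γ(τ+t, (b + λ̲^γ t)⁻). -/

import Mathlib

open MeasureTheory Filter Set

noncomputable section

/-- A cumulative distribution function on ℝ: nondecreasing, right-continuous,
tending to `0` at `-∞` and to `1` at `+∞`. -/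
def IsCDF (F : ℝ → ℝ) : Prop :=
  Monotone F ∧ (∀ x : ℝ, ContinuousWithinAt F (Ici x) x) ∧
    Tendsto F atBot (nhds 0) ∧ Tendsto F atTop (nhds 1)

/-- The pseudo-inverse `F⁻¹(v) = inf {x | v ≤ F x}` of a CDF. -/
def cdfInv (F : ℝ → ℝ) (v : ℝ) : ℝ := sInf {x : ℝ | v ≤ F x}

/-- The velocity function `λ^γ{u}(t,x)` obtained by averaging the `γ`-th coordinate
between the left limit `u^γ(t,x⁻)` and the value `u^γ(t,x)`. -/
def lamBrace {d : ℕ} (lam : Fin d → (Fin d → ℝ) → ℝ)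
    (u : Fin d → ℝ → ℝ → ℝ) (γ : Fin d) (t x : ℝ) : ℝ :=
  ∫ θ in (0:ℝ)..1,
    lam γ (Function.update (fun γ' => u γ' t x) γ
      ((1 - θ) * Function.leftLim (u γ t) x + θ * u γ t x))

/-- A test function `φ` of class `C^{1,0}_c`: continuous, compactly supported,
with continuous time derivative `φt`. -/
def IsTestFun (φ φt : ℝ → ℝ → ℝ) : Prop :=
  Continuous (fun p : ℝ × ℝ => φ p.1 p.2) ∧
    HasCompactSupport (fun p : ℝ × ℝ => φ p.1 p.2) ∧
    Continuous (fun p : ℝ × ℝ => φt p.1 p.2) ∧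
    ∀ t x : ℝ, HasDerivAt (fun s => φ s x) (φt t x) t

/-- A probabilistic solution to the diagonal hyperbolic system
`∂_t u^γ + λ^γ(u) ∂_x u^γ = 0` with initial data `u0`. -/
def IsProbSol {d : ℕ} (lam : Fin d → (Fin d → ℝ) → ℝ)
    (u : Fin d → ℝ → ℝ → ℝ) (u0 : Fin d → ℝ → ℝ) : Prop :=
  (∀ γ : Fin d, Measurable fun p : Ici (0:ℝ) × ℝ => u γ (p.1 : ℝ) p.2) ∧
  (∀ (γ : Fin d) (t : ℝ), 0 ≤ t → IsCDF (u γ t)) ∧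
  (∀ γ : Fin d, IsCDF (u0 γ)) ∧
  ∃ μ : Fin d → ℝ → Measure ℝ,
    (∀ (γ : Fin d) (t : ℝ), IsProbabilityMeasure (μ γ t)) ∧
    (∀ (γ : Fin d) (t : ℝ), 0 ≤ t → ∀ x : ℝ, (μ γ t (Iic x)).toReal = u γ t x) ∧
    ∀ φ φt : Fin d → ℝ → ℝ → ℝ, (∀ γ, IsTestFun (φ γ) (φt γ)) →
      (∑ γ : Fin d, ((∫ t in Ici (0:ℝ), ∫ x : ℝ, φt γ t x * u γ t x) +
          ∫ x : ℝ, φ γ 0 x * u0 γ x))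
        = ∑ γ : Fin d,
            ∫ t in Ici (0:ℝ), ∫ x : ℝ, φ γ t x * lamBrace lam u γ t x ∂(μ γ t)

/-- Continuity of `t ↦ u(t,·)` in `L¹_loc(ℝ)^d` on `[0,∞)`. -/
def ContL1loc {d : ℕ} (u : Fin d → ℝ → ℝ → ℝ) : Prop :=
  ∀ (γ : Fin d) (a b t₀ : ℝ), 0 ≤ t₀ →
    Tendsto (fun t => ∫ x in Icc a b, |u γ t x - u γ t₀ x|)
      (nhdsWithin t₀ (Ici 0)) (nhds 0)


lemma ibp (μ : Measure ℝ) [IsProbabilityMeasure μ] (f : ℝ → ℝ) (hf : ContDiff ℝ 1 f)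
    (hc : HasCompactSupport f) :
    ∫ x, deriv f x * (μ (Iic x)).toReal = - ∫ x, f x ∂μ := by
  have hi : Integrable (deriv f) := (hf.continuous_deriv le_rfl).integrable_of_hasCompactSupport hc.deriv
  have h1 : ∀ x, deriv f x * (μ (Iic x)).toReal
      = ∫ y, ({p : ℝ × ℝ | p.2 ≤ p.1}.indicator (fun p => deriv f p.1)) (x, y) ∂μ := by
    intro x
    have : (fun y => ({p : ℝ × ℝ | p.2 ≤ p.1}.indicator (fun p => deriv f p.1)) (x, y))
      = (Iic x).indicator (fun _ => deriv f x) := by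
      ext y; simp [indicator]
    rw [this, integral_indicator measurableSet_Iic]
    simp [Measure.real, mul_comm]
  simp_rw [h1]
  rw [integral_integral_swap]
  · rw [← integral_neg]
    congr 1; ext y
    have : (fun x => ({p : ℝ × ℝ | p.2 ≤ p.1}.indicator (fun p => deriv f p.1)) (x, y))
      = (Ici y).indicator (deriv f) := by
      ext x; simp [indicator]
    rw [this, integral_indicator measurableSet_Ici, integral_Ici_eq_integral_Ioi,
      HasCompactSupport.integral_Ioi_deriv_eq hf hc]
  · exact (hi.comp_fst μ).indicator (measurableSet_le measurable_snd measurable_fst)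

lemma meas_ker (ν : ℝ → Measure ℝ) [∀ t, IsProbabilityMeasure (ν t)] (v : ℝ → ℝ → ℝ)
    (hv : Measurable (fun p : ℝ × ℝ => v p.1 p.2)) (h : ∀ t x, (ν t (Iic x)).toReal = v t x) :
    Measurable ν := by
  refine Measurable.measure_of_isPiSystem_of_isProbabilityMeasure
    (borel_eq_generateFrom_Iic ℝ ▸ (BorelSpace.measurable_eq (α := ℝ)))
    isPiSystem_Iic ?_
  rintro _ ⟨x, rfl⟩
  have : (fun t => ν t (Iic x)) = fun t => ENNReal.ofReal (v t x) := by
    ext t; rw [← h, ENNReal.ofReal_toReal (measure_ne_top _ _)]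
  rw [this]
  exact (hv.comp (measurable_id.prodMk measurable_const)).ennreal_ofReal

lemma hcont (v : ℝ → ℝ → ℝ) (hv : Measurable (fun p : ℝ × ℝ => v p.1 p.2))
    (hv0 : ∀ t x, 0 ≤ v t x) (hv1 : ∀ t x, v t x ≤ 1)
    (hL : ∀ a b t₀ : ℝ, 0 ≤ t₀ → Tendsto (fun t => ∫ x in Icc a b, |v t x - v t₀ x|)
      (nhdsWithin t₀ (Ici 0)) (nhds 0))
    (ψ : ℝ → ℝ) (hψ : Continuous ψ) (hc : HasCompactSupport ψ) (c t₀ : ℝ) (ht : 0 ≤ t₀) :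
    Tendsto (fun t => ∫ x, ψ (x - c * t) * v t x) (nhdsWithin t₀ (Ici 0))
      (nhds (∫ x, ψ (x - c * t₀) * v t₀ x)) := by
  obtain ⟨M, hM⟩ := hc.exists_bound_of_continuous hψ
  obtain ⟨R, hR⟩ := hc.isCompact.isBounded.subset_closedBall 0
  have hvt : ∀ t, Measurable (v t) := fun t => hv.comp (measurable_const.prodMk measurable_id)
  have hψ0 : ∀ y, R < |y| → ψ y = 0 := by
    intro y hy
    by_contra h
    have := hR (subset_tsupport ψ h)
    simp at this
    linarith
  set B : ℝ := R + |c| * (|t₀| + 1) with hB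
  have hz : ∀ t, |t - t₀| ≤ 1 → ∀ x, x ∉ Icc (-B) B → ψ (x - c * t) = 0 := by
    intro t h1 x hx
    apply hψ0
    by_contra hcon
    push Not at hcon
    apply hx
    rw [mem_Icc, ← abs_le]
    have h2 : |c * t| ≤ |c| * (|t₀| + 1) := by
      rw [abs_mul]
      gcongr
      have := abs_sub_abs_le_abs_sub t t₀
      linarith
    have h3 : |x| ≤ |x - c * t| + |c * t| := by
      have := abs_add_le (x - c * t) (c * t)
      simpa using this
    linarith
  have hnear : ∀ᶠ t in nhdsWithin t₀ (Ici 0), |t - t₀| ≤ 1 := by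
    apply mem_nhdsWithin_of_mem_nhds
    filter_upwards [Metric.closedBall_mem_nhds t₀ one_pos] with t ht
    simpa [Real.dist_eq] using ht
  have hint : ∀ t s, Integrable (fun x => ψ (x - c * t) * v s x) := by
    intro t s
    refine Integrable.mul_bdd (c := 1) ?_ (hvt s).aestronglyMeasurable ?_
    · exact (hψ.integrable_of_hasCompactSupport hc).comp_sub_right _
    · refine Eventually.of_forall fun x => ?_
      rw [Real.norm_eq_abs, abs_of_nonneg (hv0 _ _)]; exact hv1 _ _
  have hA : Tendsto (fun t => ∫ x, ψ (x - c * t) * (v t x - v t₀ x)) (nhdsWithin t₀ (Ici 0))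
      (nhds 0) := by
    have h0 := (hL (-B) B t₀ ht).const_mul M
    rw [mul_zero] at h0
    refine squeeze_zero_norm' ?_ h0
    filter_upwards [hnear] with t h1
    rw [← integral_const_mul]
    have : (∫ x, ψ (x - c * t) * (v t x - v t₀ x))
        = ∫ x in Icc (-B) B, ψ (x - c * t) * (v t x - v t₀ x) := by
      rw [setIntegral_eq_integral_of_forall_compl_eq_zero]
      intro x hx
      rw [hz t h1 x hx, zero_mul]
    rw [this]
    refine norm_integral_le_of_norm_le ?_ ?_
    · refine Integrable.const_mul ?_ _
      refine Integrable.abs ?_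
      refine Measure.integrableOn_of_bounded (M := 1) (by simp)
        ((hvt t).sub (hvt t₀)).aestronglyMeasurable ?_
      refine Eventually.of_forall fun x => ?_
      rw [Real.norm_eq_abs, abs_le]
      constructor <;> linarith [hv0 t x, hv1 t x, hv0 t₀ x, hv1 t₀ x]
    · refine Eventually.of_forall fun x => ?_
      rw [norm_mul, Real.norm_eq_abs (v t x - v t₀ x)]
      gcongr
      exact hM _
  have hG : Tendsto (fun t => ∫ x, ψ (x - c * t) * v t₀ x) (nhdsWithin t₀ (Ici 0))
      (nhds (∫ x, ψ (x - c * t₀) * v t₀ x)) := by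
    refine tendsto_integral_filter_of_dominated_convergence
      ((Icc (-B) B).indicator (fun _ => M)) ?_ ?_ ?_ ?_
    · exact Eventually.of_forall fun t => (hint t t₀).aestronglyMeasurable
    · filter_upwards [hnear] with t h1
      refine Eventually.of_forall fun x => ?_
      by_cases hx : x ∈ Icc (-B) B
      · rw [indicator_of_mem hx, norm_mul, Real.norm_eq_abs (v t₀ x), abs_of_nonneg (hv0 _ _)]
        calc _ ≤ M * 1 := by
              exact mul_le_mul (hM _) (hv1 _ _) (hv0 _ _) ((norm_nonneg _).trans (hM 0))
          _ = M := mul_one _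
      · rw [indicator_of_notMem hx, hz t h1 x hx]; simp
    · rw [integrable_indicator_iff measurableSet_Icc]
      simp
    · refine Eventually.of_forall fun x => ?_
      have : Continuous (fun t => ψ (x - c * t) * v t₀ x) := by fun_prop
      exact this.continuousWithinAt
  have := hA.add hG
  rw [zero_add] at this
  refine this.congr fun t => ?_
  rw [← integral_add]
  · congr 1; ext x; ring
  · simp_rw [mul_sub]
    exact (hint t t).sub (hint t t₀)
  · exact hint t t₀

lemma core_id (v : ℝ → ℝ → ℝ) (hv : Measurable (fun p : ℝ × ℝ => v p.1 p.2))
    (hv0 : ∀ t x, 0 ≤ v t x) (hv1 : ∀ t x, v t x ≤ 1)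
    (ν : ℝ → Measure ℝ) [∀ t, IsProbabilityMeasure (ν t)]
    (hν : ∀ t x, (ν t (Iic x)).toReal = v t x)
    (L : ℝ → ℝ → ℝ) (hLm : Measurable (fun p : ℝ × ℝ => L p.1 p.2))
    (C : ℝ) (hC : ∀ t x, |L t x| ≤ C)
    (hw : ∀ φ φt : ℝ → ℝ → ℝ, IsTestFun φ φt → (∀ x, φ 0 x = 0) →
      ∫ t in Ici (0:ℝ), ∫ x : ℝ, φt t x * v t x
        = ∫ t in Ici (0:ℝ), ∫ x : ℝ, φ t x * L t x ∂(ν t))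
    (ψ : ℝ → ℝ) (hψ : ContDiff ℝ 1 ψ) (hc : HasCompactSupport ψ) (hψp : ∀ x, 0 ≤ ψ x)
    (c σ : ℝ) (hσ : ∀ t x, σ * (L t x - c) ≤ 0)
    (g g' : ℝ → ℝ) (hg : ∀ t, HasDerivAt g (g' t) t) (hg' : Continuous g')
    (hgc : HasCompactSupport g) (hgp : ∀ t, 0 ≤ g t) (hg0 : g 0 = 0) :
    σ * ∫ t in Ici (0:ℝ), g' t * ∫ x, ψ (x - c * t) * v t x ≤ 0 := by
  have hgcont : Continuous g := continuous_iff_continuousAt.2 fun t => (hg t).continuousAt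
  have hψd : Continuous (deriv ψ) := hψ.continuous_deriv le_rfl
  have hψc : Continuous ψ := hψ.continuous
  have hψi : Integrable ψ := hψc.integrable_of_hasCompactSupport hc
  have hψdi : Integrable (deriv ψ) := hψd.integrable_of_hasCompactSupport hc.deriv
  obtain ⟨M, hM⟩ := hc.exists_bound_of_continuous hψc
  have hM0 : 0 ≤ M := (norm_nonneg _).trans (hM 0)
  have hvt : ∀ t, Measurable (v t) := fun t => hv.comp (measurable_const.prodMk measurable_id)
  have hLt : ∀ t, Measurable (L t) := fun t => hLm.comp (measurable_const.prodMk measurable_id)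
  have hg'eq : g' = deriv g := by ext t; exact (hg t).deriv.symm
  have hg'c : HasCompactSupport g' := hg'eq ▸ hgc.deriv
  have hvn : ∀ t, ∀ᵐ x : ℝ, ‖v t x‖ ≤ 1 := fun t => Eventually.of_forall fun x => by
    rw [Real.norm_eq_abs, abs_of_nonneg (hv0 _ _)]; exact hv1 _ _
  have hint1 : ∀ t, Integrable (fun x => ψ (x - c * t) * v t x) := fun t =>
    (hψi.comp_sub_right _).mul_bdd (c := 1) (hvt t).aestronglyMeasurable (hvn t)
  have hint2 : ∀ t, Integrable (fun x => deriv ψ (x - c * t) * v t x) := fun t =>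
    (hψdi.comp_sub_right _).mul_bdd (c := 1) (hvt t).aestronglyMeasurable (hvn t)
  have hintν : ∀ t, Integrable (fun x => ψ (x - c * t)) (ν t) := fun t =>
    Integrable.of_bound (by fun_prop) M (Eventually.of_forall fun x => hM _)
  have hintνL : ∀ t, Integrable (fun x => ψ (x - c * t) * L t x) (ν t) := fun t =>
    (hintν t).mul_bdd (c := C) (hLt t).aestronglyMeasurable (Eventually.of_forall fun x => hC _ _)
  set H : ℝ → ℝ := fun t => ∫ x, ψ (x - c * t) * v t x with hH
  set m : ℝ → ℝ := fun t => ∫ x, ψ (x - c * t) ∂(ν t) with hm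
  set B : ℝ → ℝ := fun t => ∫ x, ψ (x - c * t) * L t x ∂(ν t) with hB
  have hibp : ∀ t, ∫ x, deriv ψ (x - c * t) * v t x = - m t := by
    intro t
    have := ibp (ν t) (fun x => ψ (x - c * t)) (by fun_prop)
      (by simpa [sub_eq_add_neg, Function.comp_def] using hc.comp_homeomorph (Homeomorph.addRight (-(c * t))))
    rw [← this]
    congr 1; ext x
    rw [hν, deriv_comp_sub_const]
  have hκ : Measurable ν := meas_ker ν v hv hν
  let κ : ProbabilityTheory.Kernel ℝ ℝ := ⟨ν, hκ⟩
  have : ProbabilityTheory.IsMarkovKernel κ := ⟨fun t => inferInstanceAs (IsProbabilityMeasure (ν t))⟩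
  have hHm : StronglyMeasurable H := by
    refine StronglyMeasurable.integral_prod_right (f := fun t x => ψ (x - c * t) * v t x) ?_
    refine Measurable.stronglyMeasurable ?_
    exact (Continuous.measurable (by fun_prop : Continuous fun p : ℝ × ℝ => ψ (p.2 - c * p.1))).mul hv
  have hmm : StronglyMeasurable m := by
    refine StronglyMeasurable.integral_kernel_prod_right (κ := κ) (f := fun t x => ψ (x - c * t)) ?_
    exact (by fun_prop : Continuous fun p : ℝ × ℝ => ψ (p.2 - c * p.1)).stronglyMeasurable
  have hBm : StronglyMeasurable B := by
    refine StronglyMeasurable.integral_kernel_prod_right (κ := κ)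
      (f := fun t x => ψ (x - c * t) * L t x) ?_
    refine Measurable.stronglyMeasurable ?_
    exact (Continuous.measurable (by fun_prop : Continuous fun p : ℝ × ℝ => ψ (p.2 - c * p.1))).mul hLm
  have hgi : Integrable g := hgcont.integrable_of_hasCompactSupport hgc
  have hg'i : Integrable g' := hg'.integrable_of_hasCompactSupport hg'c
  have hI1 : Integrable (fun t => g' t * H t) := by
    refine hg'i.mul_bdd (c := ∫ x, ψ x) hHm.aestronglyMeasurable (Eventually.of_forall fun t => ?_)
    rw [← integral_sub_right_eq_self ψ (c * t)]
    refine norm_integral_le_of_norm_le (hψi.comp_sub_right _) (Eventually.of_forall fun x => ?_)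
    rw [norm_mul, Real.norm_of_nonneg (hψp _), Real.norm_of_nonneg (hv0 _ _)]
    exact mul_le_of_le_one_right (hψp _) (hv1 _ _)
  have hI2 : Integrable (fun t => g t * m t) := by
    refine hgi.mul_bdd (c := M) hmm.aestronglyMeasurable (Eventually.of_forall fun t => ?_)
    have := norm_integral_le_of_norm_le_const (μ := ν t) (f := fun x => ψ (x - c * t)) (C := M)
      (Eventually.of_forall fun x => hM _)
    simpa using this
  have hI3 : Integrable (fun t => g t * B t) := by
    refine hgi.mul_bdd (c := M * C) hBm.aestronglyMeasurable (Eventually.of_forall fun t => ?_)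
    have := norm_integral_le_of_norm_le_const (μ := ν t) (f := fun x => ψ (x - c * t) * L t x)
      (C := M * C) (Eventually.of_forall fun x => by
        rw [norm_mul]
        exact mul_le_mul (hM _) (hC _ _) (norm_nonneg _) hM0)
    simpa using this
  have key := hw (fun t x => g t * ψ (x - c * t))
    (fun t x => g' t * ψ (x - c * t) + g t * (deriv ψ (x - c * t) * (-c))) ?_ ?_
  · have e1 : ∀ t, (∫ x, (g' t * ψ (x - c * t) + g t * (deriv ψ (x - c * t) * (-c))) * v t x)
        = g' t * H t + c * (g t * m t) := by
      intro t
      have : (fun x => (g' t * ψ (x - c * t) + g t * (deriv ψ (x - c * t) * (-c))) * v t x)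
        = fun x => g' t * (ψ (x - c * t) * v t x) + (g t * (-c)) * (deriv ψ (x - c * t) * v t x) := by
        ext x; ring
      rw [this, integral_add ((hint1 t).const_mul _) ((hint2 t).const_mul _), integral_const_mul,
        integral_const_mul, hibp]
      ring
    have e2 : ∀ t, (∫ x, g t * ψ (x - c * t) * L t x ∂(ν t)) = g t * B t := by
      intro t
      simp_rw [mul_assoc]
      rw [integral_const_mul]
    simp_rw [e1, e2] at key
    rw [integral_add hI1.integrableOn (hI2.const_mul c).integrableOn] at key
    have e3 : ∫ t in Ici (0:ℝ), g' t * H t = ∫ t in Ici (0:ℝ), (g t * B t - c * (g t * m t)) := by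
      rw [integral_sub hI3.integrableOn (hI2.const_mul c).integrableOn]
      linarith
    rw [e3, ← integral_const_mul]
    refine integral_nonpos fun t => ?_
    have e4 : σ * (B t - c * m t) = ∫ x, ψ (x - c * t) * (σ * (L t x - c)) ∂(ν t) := by
      rw [hB, hm]
      simp only
      rw [← integral_const_mul, ← integral_sub (hintνL t) ((hintν t).const_mul c),
        ← integral_const_mul]
      congr 1; ext x; ring
    have e5 : σ * (B t - c * m t) ≤ 0 := by
      rw [e4]
      exact integral_nonpos fun x => mul_nonpos_of_nonneg_of_nonpos (hψp _) (hσ _ _)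
    have := mul_nonpos_of_nonneg_of_nonpos (hgp t) e5
    simp only [Pi.zero_apply]
    linarith
  · refine ⟨by fun_prop, ?_, by fun_prop, ?_⟩
    · refine HasCompactSupport.intro (K := (fun p : ℝ × ℝ => (p.1, p.2 + c * p.1)) ''
        (tsupport g ×ˢ tsupport ψ)) ((hgc.isCompact.prod hc.isCompact).image (by fun_prop)) ?_
      rintro ⟨t, x⟩ hp
      by_contra hne
      simp only [mul_eq_zero, not_or] at hne
      exact hp ⟨(t, x - c * t), ⟨subset_tsupport _ hne.1, subset_tsupport _ hne.2⟩, by simp⟩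
    · intro t x
      refine (hg t).mul ?_
      have h1 : HasDerivAt (fun s => x - c * s) (-c) t := by
        simpa using ((hasDerivAt_id t).const_mul c).const_sub x
      exact ((hψ.differentiable one_ne_zero) _).hasDerivAt.comp t h1
  · intro x; simp [hg0]

lemma mono_H (v : ℝ → ℝ → ℝ) (hv : Measurable (fun p : ℝ × ℝ => v p.1 p.2))
    (hv0 : ∀ t x, 0 ≤ v t x) (hv1 : ∀ t x, v t x ≤ 1)
    (hL : ∀ a b t₀ : ℝ, 0 ≤ t₀ → Tendsto (fun t => ∫ x in Icc a b, |v t x - v t₀ x|)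
      (nhdsWithin t₀ (Ici 0)) (nhds 0))
    (ψ : ℝ → ℝ) (hψc : Continuous ψ) (hc : HasCompactSupport ψ) (hψp : ∀ x, 0 ≤ ψ x)
    (c σ : ℝ)
    (hcore : ∀ g g' : ℝ → ℝ, (∀ t, HasDerivAt g (g' t) t) → Continuous g' →
      HasCompactSupport g → (∀ t, 0 ≤ g t) → g 0 = 0 →
      σ * ∫ t in Ici (0:ℝ), g' t * ∫ x, ψ (x - c * t) * v t x ≤ 0)
    (τ t : ℝ) (hτ : 0 ≤ τ) (ht : 0 ≤ t) :
    σ * ∫ x, ψ (x - c * τ) * v τ x ≤ σ * ∫ x, ψ (x - c * (τ + t)) * v (τ + t) x := by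
  have hψi : Integrable ψ := hψc.integrable_of_hasCompactSupport hc
  set H : ℝ → ℝ := fun t => ∫ x, ψ (x - c * t) * v t x with hH
  have hHm : StronglyMeasurable H := by
    refine StronglyMeasurable.integral_prod_right (f := fun t x => ψ (x - c * t) * v t x) ?_
    refine Measurable.stronglyMeasurable ?_
    exact (Continuous.measurable (by fun_prop : Continuous fun p : ℝ × ℝ => ψ (p.2 - c * p.1))).mul hv
  have hHb : ∀ t, ‖H t‖ ≤ ∫ x, ψ x := by
    intro t
    rw [← integral_sub_right_eq_self ψ (c * t)]
    refine norm_integral_le_of_norm_le (hψi.comp_sub_right _) (Eventually.of_forall fun x => ?_)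
    rw [norm_mul, Real.norm_of_nonneg (hψp _), Real.norm_of_nonneg (hv0 _ _)]
    exact mul_le_of_le_one_right (hψp _) (hv1 _ _)
  have hHc : ∀ t₀, 0 ≤ t₀ → Tendsto (fun s => H (s + t₀)) (nhdsWithin 0 (Ici 0)) (nhds (H t₀)) := by
    intro t₀ h0
    refine (hcont v hv hv0 hv1 hL ψ hψc hc c t₀ h0).comp ?_
    refine tendsto_nhdsWithin_iff.2 ⟨?_, ?_⟩
    · have : Continuous (fun s : ℝ => s + t₀) := by fun_prop
      simpa using (this.tendsto 0).mono_left nhdsWithin_le_nhds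
    · filter_upwards [self_mem_nhdsWithin] with s hs
      simp only [mem_Ici] at hs ⊢
      linarith
  change σ * H τ ≤ σ * H (τ + t)
  by_contra hcon
  push Not at hcon
  obtain ⟨δ, hδ0, hδ⟩ : ∃ δ, 0 < δ ∧ δ < σ * H τ - σ * H (τ + t) :=
    exists_between (by linarith)
  have hF := ((hHc τ hτ).const_mul σ).sub ((hHc (τ + t) (by linarith)).const_mul σ)
  have hF2 := hF.eventually (lt_mem_nhds hδ)
  obtain ⟨ε, hε, hε2⟩ := (mem_nhdsGE_iff_exists_Icc_subset (a := (0:ℝ))).1 hF2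
  set ρ : ℝ → ℝ := fun s => max 0 (s * (ε - s)) with hρ
  have hρc : Continuous ρ := by fun_prop
  have hρ0 : ∀ s, 0 ≤ ρ s := fun s => le_max_left _ _
  have hρz : ∀ s, s ∉ Icc 0 ε → ρ s = 0 := by
    intro s hs
    apply max_eq_left
    rw [mem_Icc, not_and_or, not_le, not_le] at hs
    rcases hs with hs | hs <;> nlinarith
  have hρcs : HasCompactSupport ρ := HasCompactSupport.intro isCompact_Icc hρz
  have hρi : Integrable ρ := hρc.integrable_of_hasCompactSupport hρcs
  have hρpos : 0 < ∫ s, ρ s := by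
    refine hρc.integral_pos_of_hasCompactSupport_nonneg_nonzero hρcs hρ0 (x := ε / 2) ?_
    have : 0 < ε / 2 * (ε - ε / 2) := by apply mul_pos <;> linarith
    exact (lt_max_of_lt_right this).ne'
  set P : ℝ → ℝ := fun s => ∫ r in (0:ℝ)..s, ρ r with hP
  have hPd : ∀ s, HasDerivAt P (ρ s) s := fun s => hρc.integral_hasStrictDerivAt 0 s |>.hasDerivAt
  have hPdiff : Differentiable ℝ P := fun s => (hPd s).differentiableAt
  have hPm : Monotone P := monotone_of_deriv_nonneg hPdiff fun s => by
    rw [(hPd s).deriv]; exact hρ0 s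
  have hPsub : ∀ a b, P b - P a = ∫ r in a..b, ρ r := fun a b =>
    intervalIntegral.integral_interval_sub_left (hρc.intervalIntegrable _ _)
      (hρc.intervalIntegrable _ _)
  have hzl : ∀ a b, a ≤ b → b ≤ 0 → P b - P a = 0 := by
    intro a b hab hb
    rw [hPsub, intervalIntegral.integral_of_le hab, integral_Ioc_eq_integral_Ioo]
    refine setIntegral_eq_zero_of_forall_eq_zero fun x hx => hρz x fun h => ?_
    linarith [hx.2, h.1]
  have hzr : ∀ a b, a ≤ b → ε ≤ a → P b - P a = 0 := by
    intro a b hab hb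
    rw [hPsub, intervalIntegral.integral_of_le hab]
    refine setIntegral_eq_zero_of_forall_eq_zero fun x hx => hρz x fun h => ?_
    linarith [hx.1, h.2]
  have key := hcore (fun s => P (s - τ) - P (s - (τ + t)))
    (fun s => ρ (s - τ) - ρ (s - (τ + t))) ?_ (by fun_prop) ?_ ?_ ?_
  · have hρH : ∀ a, Integrable (fun s => ρ (s - a) * H s) := fun a =>
      (hρi.comp_sub_right a).mul_bdd hHm.aestronglyMeasurable (Eventually.of_forall hHb)
    have hsh : ∀ a, 0 ≤ a → ∫ s in Ici (0:ℝ), ρ (s - a) * H s = ∫ s, ρ s * H (s + a) := by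
      intro a ha
      rw [setIntegral_eq_integral_of_forall_compl_eq_zero]
      · rw [← integral_sub_right_eq_self (fun s => ρ s * H (s + a)) a]
        simp
      · intro s hs
        rw [hρz, zero_mul]
        intro h
        apply hs
        simp only [mem_Icc, mem_Ici] at h ⊢
        linarith [h.1]
    have hi2 : ∀ a, Integrable (fun s => ρ s * H (s + a)) := fun a => by
      simpa using (hρH a).comp_add_right a
    simp_rw [sub_mul] at key
    change σ * ∫ s in Ici (0:ℝ), (ρ (s - τ) * H s - ρ (s - (τ + t)) * H s) ≤ 0 at key
    rw [integral_sub (hρH _).integrableOn (hρH _).integrableOn, hsh τ hτ,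
      hsh (τ + t) (by linarith), ← integral_sub (hi2 _) (hi2 _), ← integral_const_mul] at key
    have hlow : ∫ s, δ * ρ s ≤ ∫ s, σ * (ρ s * H (s + τ) - ρ s * H (s + (τ + t))) := by
      refine integral_mono (hρi.const_mul δ) (((hi2 _).sub (hi2 _)).const_mul σ) fun s => ?_
      by_cases hs : s ∈ Icc 0 ε
      · have h1 : δ < σ * H (s + τ) - σ * H (s + (τ + t)) := hε2 hs
        have := mul_le_mul_of_nonneg_right h1.le (hρ0 s)
        simp only
        linarith
      · simp [hρz s hs]
    rw [integral_const_mul] at hlow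
    have := mul_pos hδ0 hρpos
    linarith
  · intro s
    have h1 := (hPd (s - τ)).comp_sub_const s τ
    have h2 := (hPd (s - (τ + t))).comp_sub_const s (τ + t)
    exact h1.sub h2
  · refine HasCompactSupport.intro (K := Icc τ (τ + t + ε)) isCompact_Icc fun s hs => ?_
    rw [mem_Icc, not_and_or, not_le, not_le] at hs
    rcases hs with hs | hs
    · exact hzl _ _ (by linarith) (by linarith)
    · exact hzr _ _ (by linarith) (by linarith)
  · intro s
    exact sub_nonneg.2 (hPm (by linarith))
  · exact hzl _ _ (by linarith) (by linarith)

lemma H_bounds (F : ℝ → ℝ) (hF : Monotone F) (hF0 : ∀ x, 0 ≤ F x) (hF1 : ∀ x, F x ≤ 1)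
    (ψ : ℝ → ℝ) (hψc : Continuous ψ) (hc : HasCompactSupport ψ) (hψp : ∀ x, 0 ≤ ψ x)
    (α β : ℝ) (hz : ∀ x, x ∉ Icc α β → ψ x = 0) (s : ℝ) :
    F (α + s) * (∫ x, ψ x) ≤ ∫ x, ψ (x - s) * F x ∧
    ∫ x, ψ (x - s) * F x ≤ F (β + s) * (∫ x, ψ x) := by
  have hψi : Integrable ψ := hψc.integrable_of_hasCompactSupport hc
  have hi : Integrable (fun x => ψ (x - s) * F x) :=
    (hψi.comp_sub_right s).mul_bdd (c := 1) hF.measurable.aestronglyMeasurable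
      (Eventually.of_forall fun x => by rw [Real.norm_of_nonneg (hF0 x)]; exact hF1 x)
  rw [← integral_sub_right_eq_self ψ s, ← integral_const_mul, ← integral_const_mul]
  constructor
  · refine integral_mono ((hψi.comp_sub_right s).const_mul _) hi fun x => ?_
    by_cases hx : x - s ∈ Icc α β
    · have := mul_le_mul_of_nonneg_right (hF (by linarith [hx.1] : α + s ≤ x)) (hψp (x - s))
      simp only
      linarith
    · simp [hz _ hx]
  · refine integral_mono hi ((hψi.comp_sub_right s).const_mul _) fun x => ?_
    by_cases hx : x - s ∈ Icc α β
    · have := mul_le_mul_of_nonneg_right (hF (by linarith [hx.2] : x ≤ β + s)) (hψp (x - s))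
      simp only
      linarith
    · simp [hz _ hx]

lemma exists_bump (α β : ℝ) (h : α < β) : ∃ ψ : ℝ → ℝ, ContDiff ℝ 1 ψ ∧ HasCompactSupport ψ ∧
    (∀ x, 0 ≤ ψ x) ∧ (∀ x, x ∉ Icc α β → ψ x = 0) ∧ 0 < ∫ x, ψ x := by
  let f : ContDiffBump ((α + β) / 2) := ⟨(β - α) / 4, (β - α) / 2, by linarith, by linarith⟩
  refine ⟨f, f.contDiff, f.hasCompactSupport, fun x => f.nonneg, ?_, f.integral_pos⟩
  intro x hx
  by_contra hne
  have : x ∈ Function.support f := hne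
  rw [f.support_eq, Real.ball_eq_Ioo] at this
  apply hx
  have h1 : f.rOut = (β - α) / 2 := rfl
  rw [h1] at this
  constructor <;> linarith [this.1, this.2]

lemma lam_ext_cont {d : ℕ} (f : (Fin d → ℝ) → ℝ) (hf : ContinuousOn f (Icc (0 : Fin d → ℝ) 1)) :
    Continuous (fun w : Fin d → ℝ => f (fun i => max 0 (min 1 (w i)))) := by
  refine hf.comp_continuous (by fun_prop) fun w => ⟨fun i => le_max_left _ _, fun i => ?_⟩
  exact max_le zero_le_one (min_le_left _ _)

lemma clamp_eq {d : ℕ} (w : Fin d → ℝ) (hw : w ∈ Icc (0 : Fin d → ℝ) 1) :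
    (fun i => max 0 (min 1 (w i))) = w := by
  ext i
  have h0 : 0 ≤ w i := hw.1 i
  have h1 : w i ≤ 1 := hw.2 i
  rw [min_eq_right h1, max_eq_right h0]

lemma cdf_bounds {F : ℝ → ℝ} (h : IsCDF F) : (∀ x, 0 ≤ F x) ∧ (∀ x, F x ≤ 1) :=
  ⟨fun x => h.1.le_of_tendsto h.2.2.1 x, fun x => h.1.ge_of_tendsto h.2.2.2 x⟩

lemma leftLim_bounds {F : ℝ → ℝ} (h : IsCDF F) (x : ℝ) :
    0 ≤ Function.leftLim F x ∧ Function.leftLim F x ≤ 1 := by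
  refine ⟨?_, (h.1.leftLim_le le_rfl).trans ((cdf_bounds h).2 x)⟩
  exact ((cdf_bounds h).1 (x - 1)).trans (h.1.le_leftLim (by linarith))

lemma upd_mem {d : ℕ} (u : Fin d → ℝ → ℝ → ℝ) (γ : Fin d) (t x : ℝ)
    (hu : ∀ γ, IsCDF (u γ t)) (θ : ℝ) (h0 : 0 ≤ θ) (h1 : θ ≤ 1) :
    Function.update (fun γ' => u γ' t x) γ
      ((1 - θ) * Function.leftLim (u γ t) x + θ * u γ t x) ∈ Icc (0 : Fin d → ℝ) 1 := by
  have hl := leftLim_bounds (hu γ) x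
  have a0 := (cdf_bounds (hu γ)).1 x
  have a1 := (cdf_bounds (hu γ)).2 x
  constructor
  · intro i
    by_cases hi : i = γ
    · subst hi
      simp only [Function.update_self, Pi.zero_apply]
      have := mul_nonneg (sub_nonneg.2 h1) hl.1
      have := mul_nonneg h0 a0
      linarith
    · simpa [hi] using (cdf_bounds (hu i)).1 x
  · intro i
    by_cases hi : i = γ
    · subst hi
      simp only [Function.update_self, Pi.one_apply]
      have := mul_le_mul_of_nonneg_left hl.2 (sub_nonneg.2 h1)
      have := mul_le_mul_of_nonneg_left a1 h0
      linarith
    · simpa [hi] using (cdf_bounds (hu i)).2 x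

lemma lamBrace_ext {d : ℕ} (lam : Fin d → (Fin d → ℝ) → ℝ)
    (u : Fin d → ℝ → ℝ → ℝ) (γ : Fin d) (t x : ℝ) (hu : ∀ γ, IsCDF (u γ t)) :
    lamBrace lam u γ t x = ∫ θ in (0:ℝ)..1, (fun w : Fin d → ℝ => lam γ (fun i => max 0 (min 1 (w i))))
      (Function.update (fun γ' => u γ' t x) γ
      ((1 - θ) * Function.leftLim (u γ t) x + θ * u γ t x)) := by
  refine intervalIntegral.integral_congr fun θ hθ => ?_
  rw [uIcc_of_le zero_le_one] at hθ
  simp only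
  rw [clamp_eq _ (upd_mem u γ t x hu θ hθ.1 hθ.2)]

lemma lamBrace_bounds {d : ℕ} (lam : Fin d → (Fin d → ℝ) → ℝ)
    (u : Fin d → ℝ → ℝ → ℝ) (γ : Fin d) (t x : ℝ) (hu : ∀ γ, IsCDF (u γ t))
    (hlam : ContinuousOn (lam γ) (Icc (0 : Fin d → ℝ) 1)) :
    sInf (lam γ '' Icc (0 : Fin d → ℝ) 1) ≤ lamBrace lam u γ t x ∧
    lamBrace lam u γ t x ≤ sSup (lam γ '' Icc (0 : Fin d → ℝ) 1) := by
  have hcpt : IsCompact (lam γ '' Icc (0 : Fin d → ℝ) 1) := isCompact_Icc.image_of_continuousOn hlam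
  have hcont : Continuous (fun θ : ℝ => (fun w : Fin d → ℝ => lam γ (fun i => max 0 (min 1 (w i))))
      (Function.update (fun γ' => u γ' t x) γ
      ((1 - θ) * Function.leftLim (u γ t) x + θ * u γ t x))) :=
    (lam_ext_cont (lam γ) hlam).comp (by fun_prop)
  have hmem : ∀ w : Fin d → ℝ, lam γ (fun i => max 0 (min 1 (w i))) ∈
      lam γ '' Icc (0 : Fin d → ℝ) 1 := fun w =>
    mem_image_of_mem _ ⟨fun i => le_max_left _ _, fun i => max_le zero_le_one (min_le_left _ _)⟩
  rw [lamBrace_ext lam u γ t x hu]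
  constructor
  · have := intervalIntegral.integral_mono_on (μ := volume) (zero_le_one' ℝ)
      (f := fun _ => sInf (lam γ '' Icc (0 : Fin d → ℝ) 1))
      (by simp) (hcont.intervalIntegrable 0 1) (fun θ _ => csInf_le hcpt.bddBelow (hmem _))
    simpa using this
  · have := intervalIntegral.integral_mono_on (μ := volume) (zero_le_one' ℝ)
      (g := fun _ => sSup (lam γ '' Icc (0 : Fin d → ℝ) 1))
      (hcont.intervalIntegrable 0 1) (by simp) (fun θ _ => le_csSup hcpt.bddAbove (hmem _))
    simpa using this

lemma lamBrace_meas {d : ℕ} (lam : Fin d → (Fin d → ℝ) → ℝ)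
    (u : Fin d → ℝ → ℝ → ℝ) (γ : Fin d) (hu : ∀ γ t, 0 ≤ t → IsCDF (u γ t))
    (hm : ∀ γ, Measurable (fun p : ℝ × ℝ => u γ (max p.1 0) p.2))
    (hlam : ContinuousOn (lam γ) (Icc (0 : Fin d → ℝ) 1)) :
    Measurable (fun p : ℝ × ℝ => lamBrace lam u γ (max p.1 0) p.2) := by
  have hl : Measurable (fun p : ℝ × ℝ => Function.leftLim (u γ (max p.1 0)) p.2) := by
    refine measurable_of_tendsto_metrizable
      (f := fun (n : ℕ) (p : ℝ × ℝ) => u γ (max p.1 0) (p.2 - 1 / ((n : ℝ) + 1))) ?_ ?_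
    · intro n
      exact (hm γ).comp (measurable_fst.prodMk (measurable_snd.sub_const _))
    · rw [tendsto_pi_nhds]
      rintro ⟨t, x⟩
      refine ((hu γ (max t 0) (le_max_right _ _)).1.tendsto_leftLim x).comp ?_
      refine tendsto_nhdsWithin_iff.2 ⟨?_, Eventually.of_forall fun n => ?_⟩
      · simpa using (tendsto_one_div_add_atTop_nhds_zero_nat (𝕜 := ℝ)).const_sub x
      · have : (0:ℝ) < 1 / ((n : ℝ) + 1) := by positivity
        simp only [mem_Iio]; linarith
  have heq : (fun p : ℝ × ℝ => lamBrace lam u γ (max p.1 0) p.2) = fun p : ℝ × ℝ =>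
      ∫ θ in Ioc (0:ℝ) 1, (fun w : Fin d → ℝ => lam γ (fun i => max 0 (min 1 (w i))))
      (Function.update (fun γ' => u γ' (max p.1 0) p.2) γ
      ((1 - θ) * Function.leftLim (u γ (max p.1 0)) p.2 + θ * u γ (max p.1 0) p.2)) := by
    ext p
    rw [lamBrace_ext lam u γ _ _ (fun γ' => hu γ' _ (le_max_right _ _)),
      intervalIntegral.integral_of_le zero_le_one]
  rw [heq]
  refine StronglyMeasurable.measurable ?_
  refine StronglyMeasurable.integral_prod_right (f := fun (p : ℝ × ℝ) (θ : ℝ) =>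
    (fun w : Fin d → ℝ => lam γ (fun i => max 0 (min 1 (w i))))
      (Function.update (fun γ' => u γ' (max p.1 0) p.2) γ
      ((1 - θ) * Function.leftLim (u γ (max p.1 0)) p.2 + θ * u γ (max p.1 0) p.2))) ?_
  refine Measurable.stronglyMeasurable ?_
  refine (lam_ext_cont (lam γ) hlam).measurable.comp ?_
  refine measurable_pi_lambda _ fun i => ?_
  by_cases hi : i = γ
  · subst hi
    simp only [Function.update_self]
    exact ((measurable_const.sub measurable_snd).mul (hl.comp measurable_fst)).add
      (measurable_snd.mul ((hm i).comp measurable_fst))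
  · simp only [Function.update_of_ne hi]
    exact (hm i).comp measurable_fst


/-- **Finite speed of propagation**: for a probabilistic solution continuous in
`L¹_loc`, one has `u^γ(τ,a) ≤ u^γ(τ+t, a + λ̄^γ t)` and
`u^γ(τ,b⁻) ≥ u^γ(τ+t, (b + λ̲^γ t)⁻)` for all `τ, t ≥ 0`. -/
theorem finite_speed_of_propagation {d : ℕ} (hd : 1 ≤ d)
    (lam : Fin d → (Fin d → ℝ) → ℝ)
    (hlam : ∀ γ : Fin d, ContinuousOn (lam γ) (Icc (0 : Fin d → ℝ) 1))
    (u : Fin d → ℝ → ℝ → ℝ) (u0 : Fin d → ℝ → ℝ)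
    (hsol : IsProbSol lam u u0) (hL1 : ContL1loc u)
    (γ : Fin d) (τ t : ℝ) (hτ : 0 ≤ τ) (ht : 0 ≤ t) :
    (∀ a : ℝ, u γ τ a ≤ u γ (τ + t) (a + sSup (lam γ '' Icc (0 : Fin d → ℝ) 1) * t)) ∧
    (∀ b : ℝ, Function.leftLim (u γ (τ + t)) (b + sInf (lam γ '' Icc (0 : Fin d → ℝ) 1) * t)
        ≤ Function.leftLim (u γ τ) b) := by
  obtain ⟨hmeas, hcdf, hcdf0, μ, hμp, hμ, hweak⟩ := hsol
  have hm : ∀ γ, Measurable (fun p : ℝ × ℝ => u γ (max p.1 0) p.2) := by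
    intro γ
    have h1 : Measurable (fun p : ℝ × ℝ => ((⟨max p.1 0, mem_Ici.2 (le_max_right _ _)⟩ : Ici (0:ℝ)), p.2)) :=
      ((measurable_fst.max measurable_const).subtype_mk).prodMk measurable_snd
    exact (hmeas γ).comp h1
  set v : ℝ → ℝ → ℝ := fun t x => u γ (max t 0) x with hv
  set ν : ℝ → Measure ℝ := fun t => μ γ (max t 0) with hν
  have : ∀ t, IsProbabilityMeasure (ν t) := fun t => hμp γ _
  set L : ℝ → ℝ → ℝ := fun t x => lamBrace lam u γ (max t 0) x with hL
  have hvcdf : ∀ t, IsCDF (v t) := fun t => hcdf γ _ (le_max_right _ _)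
  have hv0 : ∀ t x, 0 ≤ v t x := fun t => (cdf_bounds (hvcdf t)).1
  have hv1 : ∀ t x, v t x ≤ 1 := fun t => (cdf_bounds (hvcdf t)).2
  have hvu : ∀ t, 0 ≤ t → v t = u γ t := fun t h => by simp only [hv, max_eq_left h]
  have hLb : ∀ t x, sInf (lam γ '' Icc (0 : Fin d → ℝ) 1) ≤ L t x ∧
      L t x ≤ sSup (lam γ '' Icc (0 : Fin d → ℝ) 1) := fun t x =>
    lamBrace_bounds lam u γ _ x (fun γ' => hcdf γ' _ (le_max_right _ _)) (hlam γ)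
  have hLm : Measurable (fun p : ℝ × ℝ => L p.1 p.2) :=
    lamBrace_meas lam u γ hcdf hm (hlam γ)
  have hC : ∀ t x, |L t x| ≤ max |sInf (lam γ '' Icc (0 : Fin d → ℝ) 1)|
      |sSup (lam γ '' Icc (0 : Fin d → ℝ) 1)| := fun t x =>
    abs_le_max_abs_abs (hLb t x).1 (hLb t x).2
  have hw : ∀ φ φt : ℝ → ℝ → ℝ, IsTestFun φ φt → (∀ x, φ 0 x = 0) →
      ∫ t in Ici (0:ℝ), ∫ x : ℝ, φt t x * v t x
        = ∫ t in Ici (0:ℝ), ∫ x : ℝ, φ t x * L t x ∂(ν t) := by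
    intro φ φt hφ hφ0
    have h := hweak (fun γ' => if γ' = γ then φ else 0) (fun γ' => if γ' = γ then φt else 0) ?_
    · rw [Finset.sum_eq_single γ, Finset.sum_eq_single γ] at h
      · simp only [if_true, hφ0, zero_mul, integral_zero, add_zero] at h
        calc _ = _ := setIntegral_congr_fun measurableSet_Ici fun s hs => by
              simp only [hv, max_eq_left (mem_Ici.1 hs)]
          _ = _ := h
          _ = _ := setIntegral_congr_fun measurableSet_Ici fun s hs => by
              simp only [hL, hν, max_eq_left (mem_Ici.1 hs)]
      · intro i _ hi; simp [hi]
      · simp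
      · intro i _ hi; simp [hi]
      · simp
    · intro i
      by_cases hi : i = γ
      · simpa [hi] using hφ
      · simp only [hi, if_false]
        exact ⟨continuous_const, HasCompactSupport.zero, continuous_const,
          fun t x => hasDerivAt_const _ _⟩
  have hLl : ∀ a b t₀ : ℝ, 0 ≤ t₀ → Tendsto (fun t => ∫ x in Icc a b, |v t x - v t₀ x|)
      (nhdsWithin t₀ (Ici 0)) (nhds 0) := by
    intro a b t₀ h0
    refine (hL1 γ a b t₀ h0).congr' ?_
    filter_upwards [self_mem_nhdsWithin] with s hs
    rw [hvu s hs, hvu t₀ h0]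
  have hνv : ∀ t x, (ν t (Iic x)).toReal = v t x := fun t x => hμ γ _ (le_max_right _ _) x
  have main : ∀ c σ : ℝ, (∀ t x, σ * (L t x - c) ≤ 0) → ∀ α β : ℝ, α < β →
      ∃ I A B : ℝ, 0 < I ∧ σ * A ≤ σ * B ∧ v τ α * I ≤ A ∧ A ≤ v τ β * I ∧
        v (τ + t) (α + c * t) * I ≤ B ∧ B ≤ v (τ + t) (β + c * t) * I := by
    intro c σ hσ α β hαβ
    obtain ⟨ψ, hψ, hψc, hψp, hψz, hψi⟩ := exists_bump (α - c * τ) (β - c * τ) (by linarith)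
    have b1 := H_bounds (v τ) (hvcdf τ).1 (hv0 τ) (hv1 τ) ψ hψ.continuous hψc hψp _ _ hψz (c * τ)
    have b2 := H_bounds (v (τ + t)) (hvcdf _).1 (hv0 _) (hv1 _) ψ hψ.continuous hψc hψp _ _ hψz
      (c * (τ + t))
    have e1 : ∀ y, y - c * τ + c * τ = y := fun y => by ring
    have e2 : ∀ y, y - c * τ + c * (τ + t) = y + c * t := fun y => by ring
    rw [e1, e1] at b1
    rw [e2, e2] at b2
    refine ⟨_, _, _, hψi, ?_, b1.1, b1.2, b2.1, b2.2⟩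
    exact mono_H v (hm γ) hv0 hv1 hLl ψ hψ.continuous hψc hψp c σ
      (core_id v (hm γ) hv0 hv1 ν hνv L hLm _ hC hw ψ hψ hψc hψp c σ hσ) τ t hτ ht
  have hτt : 0 ≤ τ + t := by linarith
  rw [← hvu τ hτ, ← hvu (τ + t) hτt]
  constructor
  · intro a
    set c := sSup (lam γ '' Icc (0 : Fin d → ℝ) 1)
    have hlt : ∀ β, a + c * t < β → v τ a ≤ v (τ + t) β := by
      intro β hβ
      obtain ⟨I, A, B, hI, hAB, h1, h2, h3, h4⟩ := main c 1
        (fun s x => by linarith [(hLb s x).2]) a (β - c * t) (by linarith)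
      rw [sub_add_cancel] at h4
      exact le_of_mul_le_mul_right (by linarith) hI
    have hrc : Tendsto (v (τ + t)) (nhdsWithin (a + c * t) (Ioi (a + c * t)))
        (nhds (v (τ + t) (a + c * t))) :=
      ((hvcdf (τ + t)).2.1 (a + c * t)).mono Ioi_subset_Ici_self
    refine ge_of_tendsto hrc ?_
    filter_upwards [self_mem_nhdsWithin] with β hβ
    exact hlt β hβ
  · intro b
    set c := sInf (lam γ '' Icc (0 : Fin d → ℝ) 1)
    refine le_of_tendsto ((hvcdf (τ + t)).1.tendsto_leftLim (b + c * t)) ?_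
    filter_upwards [self_mem_nhdsWithin] with y hy
    simp only [mem_Iio] at hy
    obtain ⟨β, hβ1, hβ2⟩ := exists_between (by linarith : y - c * t < b)
    obtain ⟨I, A, B, hI, hAB, h1, h2, h3, h4⟩ := main c (-1)
      (fun s x => by linarith [(hLb s x).1]) (y - c * t) β hβ1
    rw [sub_add_cancel] at h3
    have : v (τ + t) y ≤ v τ β := le_of_mul_le_mul_right (by linarith) hI
    exact this.trans ((hvcdf τ).1.le_leftLim hβ2)
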